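/- arXiv:2302.13920 — 3 statements merged into one kernel-verified Lean document; each statement's English description precedes it below -/
import Mathlib

section
/- Suppose J ⊆ I ⊆ K are dyadic intervals with dist(J, ∂I) > 2·ℓ(J)^ε·ℓ(I)^{1−ε} for some 0 < ε < 1/2. Then for every positive Borel measure μ on ℝ, P(J, 1_{K∖I}μ) ≤ C_ε·(ℓ(J)/ℓ(I))^{1−2ε}·P(I, 1_{K∖I}μ), where C_ε depends only on ε. -/
open MeasureTheory Set
open scoped ENNReal Classical

noncomputable section

/-- A dyadic interval `[n·2^k, (n+1)·2^k)`. -/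
structure DI where
  k : ℤ
  n : ℤ

namespace DI

/-- The underlying set of a dyadic interval. -/
def set (I : DI) : Set ℝ := Set.Ico ((I.n : ℝ) * (2:ℝ) ^ I.k) (((I.n : ℝ) + 1) * (2:ℝ) ^ I.k)

/-- The side length `ℓ(I)`. -/
def len (I : DI) : ℝ := (2:ℝ) ^ I.k

/-- left endpoint -/
def lo (I : DI) : ℝ := (I.n : ℝ) * (2:ℝ) ^ I.k

/-- right endpoint -/
def hi (I : DI) : ℝ := ((I.n : ℝ) + 1) * (2:ℝ) ^ I.k

/-- center `c_I` -/
def center (I : DI) : ℝ := ((I.n : ℝ) + 1/2) * (2:ℝ) ^ I.k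

/-- left dyadic child -/
def left (I : DI) : DI := ⟨I.k - 1, 2 * I.n⟩

/-- right dyadic child -/
def right (I : DI) : DI := ⟨I.k - 1, 2 * I.n + 1⟩

/-- parent interval -/
def parent (I : DI) : DI := ⟨I.k + 1, Int.fdiv I.n 2⟩

/-- m-th ancestor `π^m I` -/
def anc (I : DI) : ℕ → DI
  | 0 => I
  | (m+1) => (anc I m).parent

/-- distance of `J ⊆ K` to the boundary of `K` -/
def distToBdry (J K : DI) : ℝ := min (J.lo - K.lo) (K.hi - J.hi)

/-- the child of `I` containing `J` (for `J ⊆ I` strictly) -/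
def childContaining (I J : DI) : DI := if J.set ⊆ I.left.set then I.left else I.right

/-- the sibling `θ(I_J)` of the child of `I` containing `J` -/
def sibling (I J : DI) : DI := if J.set ⊆ I.left.set then I.right else I.left

end DI

/-- `J` is an `(r,ε)`-good dyadic interval. -/
def IsGood (r : ℕ) (ε : ℝ) (J : DI) : Prop :=
  ∀ K : DI, J.set ⊆ K.set → (2:ℝ) ^ r * J.len ≤ K.len →
    J.len ^ ε * K.len ^ (1 - ε) / 2 ≤ DI.distToBdry J K

/-- Poisson integral of `μ` relative to an interval with center `c` and length `ℓ`. -/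
def poissonI (c ℓ : ℝ) (μ : Measure ℝ) : ℝ≥0∞ :=
  ∫⁻ y, ENNReal.ofReal (ℓ / (ℓ + |y - c|) ^ 2) ∂μ

/-- Poisson integral `P(I, μ)` for a dyadic interval. -/
def DI.poisson (I : DI) (μ : Measure ℝ) : ℝ≥0∞ := poissonI I.center I.len μ

/-- average `E^μ_K f = (1/|K|_μ) ∫_K f dμ` -/
def avg (μ : Measure ℝ) (K : Set ℝ) (f : ℝ → ℝ) : ℝ := (∫ x in K, f x ∂μ) / (μ K).toReal

/-- martingale (Haar) difference `Δ_I^μ f` -/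
def haar (μ : Measure ℝ) (I : DI) (f : ℝ → ℝ) : ℝ → ℝ := fun x =>
  (I.left.set.indicator (fun _ => avg μ I.left.set f)) x
    + (I.right.set.indicator (fun _ => avg μ I.right.set f)) x
    - (I.set.indicator (fun _ => avg μ I.set f)) x

/-- truncated Hilbert transform `H_t(f σ)(x)` -/
def Htr (σ : Measure ℝ) (f : ℝ → ℝ) (t : ℝ) (x : ℝ) : ℝ :=
  ∫ y in {y : ℝ | t < |y - x|}, f y / (y - x) ∂σ

/-- pairing `⟨H_t(f σ), ψ⟩_{L²(ω)}` -/
def pairH (σ ω : Measure ℝ) (f ψ : ℝ → ℝ) (t : ℝ) : ℝ :=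
  ∫ x, Htr σ f t x * ψ x ∂ω

/-- testing characteristic `𝔗_H(σ, ω)`, uniform over truncations -/
def testH (σ ω : Measure ℝ) : ℝ≥0∞ :=
  ⨆ (a : ℝ) (b : ℝ) (_ : a < b) (t : ℝ) (_ : 0 < t),
    eLpNorm (Htr σ ((Set.Ico a b).indicator 1) t) 2 ω / (σ (Set.Ico a b)) ^ (1/2 : ℝ)

/-- operator norm characteristic `𝔑_H(σ, ω)`, uniform over truncations -/
def normH (σ ω : Measure ℝ) : ℝ≥0∞ :=
  ⨆ (t : ℝ) (_ : 0 < t) (f : ℝ → ℝ) (_ : MeasureTheory.MemLp f 2 σ),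
    eLpNorm (Htr σ f t) 2 ω / eLpNorm f 2 σ

/-- two-tailed Muckenhoupt characteristic with holes `𝒜₂^hole(σ, ω)` -/
def A2hole (σ ω : Measure ℝ) : ℝ≥0∞ :=
  ⨆ (a : ℝ) (b : ℝ) (_ : a < b),
    poissonI ((a+b)/2) (b-a) (ω.restrict (Set.Ico a b)ᶜ) * σ (Set.Ico a b) / ENNReal.ofReal (b-a)
      + ω (Set.Ico a b) / ENNReal.ofReal (b-a) * poissonI ((a+b)/2) (b-a) (σ.restrict (Set.Ico a b)ᶜ)

/-- offset Muckenhoupt characteristic `A₂^offset(σ, ω)` with parameter `r` -/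
def A2offset (r : ℕ) (σ ω : Measure ℝ) : ℝ≥0∞ :=
  ⨆ (Q : DI) (Q' : DI) (_ : Disjoint Q.set Q'.set)
    (_ : ¬ Disjoint (closure Q.set) (closure Q'.set))
    (_ : Q'.len ≤ (2:ℝ) ^ r * Q.len) (_ : Q.len ≤ (2:ℝ) ^ r * Q'.len),
    (ω Q'.set / ENNReal.ofReal Q'.len) * (σ Q.set / ENNReal.ofReal Q.len)

/-- energy `E(J,ω)²` -/
def energySq (ω : Measure ℝ) (J : DI) : ℝ≥0∞ :=
  (∫⁻ x in J.set, ENNReal.ofReal ((x - avg ω J.set (fun z => z)) ^ 2) ∂ω)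
    / (ω J.set * ENNReal.ofReal (J.len ^ 2))

/-- energy characteristic `ℰ₂(σ,ω)²` -/
def energyCharSq (σ ω : Measure ℝ) : ℝ≥0∞ :=
  ⨆ (a : ℝ) (b : ℝ) (_ : a < b) (𝒮 : Set DI)
    (_ : ∀ I ∈ 𝒮, DI.set I ⊆ Set.Ico a b)
    (_ : 𝒮.Pairwise fun I I' => Disjoint I.set I'.set),
    (∑' I : 𝒮, (I : DI).poisson (σ.restrict (Set.Ico a b \ (I : DI).set)) ^ 2
        * energySq ω (I : DI) * ω (I : DI).set) / σ (Set.Ico a b)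

/-- `ℱ`-children: maximal members of `ℱ` strictly contained in `F` -/
def fChildren (ℱ : Set DI) (F : DI) : Set DI :=
  {G | G ∈ ℱ ∧ G.set ⊂ F.set ∧ ∀ H ∈ ℱ, H.set ⊂ F.set → G.set ⊆ H.set → H = G}

/-- m-fold iterated `ℱ`-children -/
def fDesc (ℱ : Set DI) : ℕ → DI → Set DI
  | 0, F => {F}
  | (m+1), F => ⋃ G ∈ fChildren ℱ F, fDesc ℱ m G

/-- the corona `𝒞_ℱ(F)` -/
def corona (ℱ : Set DI) (F : DI) : Set DI :=
  {I | I.set ⊆ F.set ∧ ∀ F' ∈ ℱ, F'.set ⊂ F.set → ¬ I.set ⊆ F'.set}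

/-- `ℱ` is σ-Carleson with norm `Cℱ` -/
def IsCarleson (σ : Measure ℝ) (ℱ : Set DI) (Cℱ : ℝ) : Prop :=
  ∀ S ∈ ℱ, ∑' F : {F : DI // F ∈ ℱ ∧ F.set ⊆ S.set}, σ (F : DI).set
    ≤ ENNReal.ofReal Cℱ * σ S.set

/-- `W` is `(r,ε)`-deeply embedded in `F` -/
def deepIn (r : ℕ) (ε : ℝ) (W F : DI) : Prop :=
  W.set ⊆ F.set ∧ W.len ≤ (2:ℝ) ^ (-(r:ℤ)) * F.len ∧
    W.len ^ ε * F.len ^ (1 - ε) / 2 ≤ DI.distToBdry W F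

/-- the `(r,ε)`-Whitney collection `ℳ_{(r,ε)-deep}(F)` -/
def Mdeep (r : ℕ) (ε : ℝ) (F : DI) : Set DI :=
  {W | deepIn r ε W F ∧ ∀ W' : DI, deepIn r ε W' F → W.set ⊆ W'.set → W' = W}

/-- pointwise Haar projection of the identity function onto a collection `𝒮` -/
def projId (ω : Measure ℝ) (𝒮 : Set DI) : ℝ → ℝ :=
  fun x => ∑' J : 𝒮, haar ω (J : DI) (fun z => z) x

/-- functional energy characteristic `𝔉(σ, ω)` -/
def funcEnergy (r : ℕ) (ε : ℝ) (σ ω : Measure ℝ) : ℝ≥0∞ :=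
  ⨆ (ℱ : Set DI) (h : ℝ → ℝ) (_ : MeasureTheory.MemLp h 2 σ) (_ : ∀ x, 0 ≤ h x),
    (∑' F : ℱ, ∑' W : Mdeep r ε (F : DI),
      ((W : DI).poisson
          (((σ.withDensity fun y => ENNReal.ofReal (h y))).restrict ((F : DI).set)ᶜ)
        / ENNReal.ofReal (W : DI).len) ^ 2
        * ∫⁻ x in (W : DI).set,
            ENNReal.ofReal
              ((projId ω (corona ℱ (F : DI) ∩ {J : DI | J.set ⊆ (W : DI).set}) x) ^ 2) ∂ω)
      ^ (1/2 : ℝ) / eLpNorm h 2 σ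

/-- stopping-time suprema `α_ℱ(F)` of averages of `|f|` -/
def alphaF (σ : Measure ℝ) (ℱ : Set DI) (f : ℝ → ℝ) (F : DI) : ℝ :=
  ⨆ G : {G : DI // G ∈ ℱ ∧ F.set ⊆ G.set}, avg σ (G : DI).set (fun x => |f x|)

/-- projection `𝖯_F f = Σ_{K ⊆ F} Δ_K^σ f` (pointwise tsum) -/
def dyadicProj (σ : Measure ℝ) (F : DI) (f : ℝ → ℝ) : ℝ → ℝ :=
  fun x => ∑' K : {K : DI // K.set ⊆ F.set}, haar σ (K : DI) f x

/-- concentric triple 3K -/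
def tripleSet (K : DI) : Set ℝ :=
  Set.Ico (K.center - 3/2 * K.len) (K.center + 3/2 * K.len)

/-- `K` is good, inside `S`, with triple inside `S` -/
def goodTrip (r : ℕ) (ε : ℝ) (S K : DI) : Prop :=
  IsGood r ε K ∧ K.set ⊆ S.set ∧ tripleSet K ⊆ S.set

/-- `𝒲^trip(S) = {S} ∪ ℳ_good^trip(S)` -/
def Wtrip (r : ℕ) (ε : ℝ) (S : DI) : Set DI :=
  {S} ∪ {K | goodTrip r ε S K ∧ ∀ K' : DI, goodTrip r ε S K' → K.set ⊆ K'.set → K' = K}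

/-- refined Poisson-Energy characteristic `PE_𝒜^{A,trip}(Λ; σ, ω)` -/
def PEtrip (r : ℕ) (ε : ℝ) (σ ω : Measure ℝ) (F A : DI) (𝒜 : Set DI) (Λ : Finset DI) : ℝ≥0∞ :=
  ⨆ (S : DI) (_ : S ∈ fChildren 𝒜 A) (K : DI) (_ : K ∈ Wtrip r ε S),
    (K.poisson (σ.restrict (F.set \ S.set)) / ENNReal.ofReal K.len)
      * (∑ J ∈ Λ, if J.set ⊆ K.set then eLpNorm (haar ω J (fun z => z)) 2 ω ^ 2 else 0)
          ^ (1/2 : ℝ)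
      / (σ K.set) ^ (1/2 : ℝ)

/-- Poisson-Energy characteristic `PE^F(𝒞; σ, ω)` -/
def PEchar (r : ℕ) (ε : ℝ) (σ ω : Measure ℝ) (F : DI) (𝒞 : Set DI) : ℝ≥0∞ :=
  ⨆ (I : DI) (_ : I ∈ 𝒞) (_ : IsGood r ε I),
    I.poisson (σ.restrict (F.set \ I.set)) * (energySq ω I) ^ (1/2 : ℝ)
      * (ω I.set / σ I.set) ^ (1/2 : ℝ)

/-- dual integration operator `I*μ(α) = Σ_{β ⊆ α} μ(β)` -/
def Istar (μ : DI → ℝ) (α : DI) : ℝ := ∑ᶠ β ∈ {β : DI | β.set ⊆ α.set}, μ β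

/-- the minimal intervals in the support of `μ` -/
def minSupp (μ : DI → ℝ) : Set DI :=
  {α | μ α ≠ 0 ∧ ∀ β : DI, μ β ≠ 0 → β.set ⊆ α.set → β = α}

/-- `Σ_{β ∈ S, β ⊊ α} I*μ(β)` -/
def stopSum (μ : DI → ℝ) (S : Set DI) (α : DI) : ℝ :=
  ∑ᶠ β ∈ {β ∈ S | β.set ⊂ α.set}, Istar μ β

/-- stopping criterion relative to a previous antichain `S` -/
def stopProp (μ : DI → ℝ) (Γ : ℝ) (S : Set DI) (α : DI) : Prop :=
  Γ * stopSum μ S α < Istar μ α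

/-- the minimal intervals in `𝒟(o)` satisfying the stopping criterion -/
def nextGen (μ : DI → ℝ) (Γ : ℝ) (o : DI) (S : Set DI) : Set DI :=
  {α | α.set ⊆ o.set ∧ stopProp μ Γ S α ∧
    ∀ β : DI, β.set ⊆ o.set → stopProp μ Γ S β → β.set ⊆ α.set → β = α}

/-- `μ` is `Γ`-irreducible -/
def Irreducible' (μ : DI → ℝ) (Γ : ℝ) (o : DI) : Prop :=
  ¬ ∃ α : DI, α.set ⊆ o.set ∧ stopProp μ Γ (minSupp μ) α

/-- `α_A(S)` for the Stopping Child Lemma -/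
def stopAlpha (σ : Measure ℝ) (r : ℕ) (ε : ℝ) (Λf : Finset DI) (f : ℝ → ℝ) (A S : DI) : ℝ :=
  ⨆ I : {I : DI // IsGood r ε I ∧ I.set ⊆ A.set ∧
      ∃ I0 ∈ Λf, S.set ⊆ I0.set ∧ I0.set ⊂ I.set}, |avg σ (I : DI).set f|

/-!
Let `δ` be a lower bound for the distance from `J` to the boundary of `I`. Off `I` one has
`δ ≤ |y - c_J|`, while `|y - c_I| ≤ |y - c_J| + ℓ(I)/2` and `δ ≤ ℓ(I)/2`, so that
`ℓ(I) + |y - c_I| ≤ (2 ℓ(I) / δ) (ℓ(J) + |y - c_J|)`. Squaring compares the two Poisson kernels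
pointwise, with ratio at most `4 ℓ(J) ℓ(I) / δ²`; for `δ = 2 ℓ(J)^ε ℓ(I)^(1-ε)` this ratio is
exactly `(ℓ(J)/ℓ(I))^(1-2ε)`.
-/

/-- The Poisson kernel at scale `ℓ` centred at `c`, i.e. the integrand of `poissonI`. It is
comparable to, not equal to, the classical kernel `ℓ / (ℓ² + (y - c)²)`. -/
def poissonWeight (c ℓ y : ℝ) : ℝ := ℓ / (ℓ + |y - c|) ^ 2

section PoissonComparison

variable {c c' a L δ : ℝ}

lemma mul_add_abs_sub_le {y : ℝ} (ha : 0 ≤ a) (hδ : 0 ≤ δ) (hδL : δ ≤ L / 2)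
    (hcc' : |c - c'| ≤ L / 2) (hy : δ ≤ |y - c|) :
    δ * (L + |y - c'|) ≤ 2 * L * (a + |y - c|) := by
  have htri : |y - c'| ≤ |y - c| + L / 2 := (abs_sub_le y c c').trans (by gcongr)
  have hL : 0 ≤ L := by linarith
  calc δ * (L + |y - c'|) ≤ δ * (L + (|y - c| + L / 2)) := by gcongr
    _ = δ * |y - c| + 3 / 2 * L * δ := by ring
    _ ≤ L / 2 * |y - c| + 3 / 2 * L * |y - c| := by gcongr
    _ = 2 * L * |y - c| := by ring
    _ ≤ 2 * L * (a + |y - c|) := by gcongr; linarith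

lemma poissonWeight_le_mul_poissonWeight {y : ℝ} (ha : 0 ≤ a) (hδ : 0 < δ) (hδL : δ ≤ L / 2)
    (hcc' : |c - c'| ≤ L / 2) (hy : δ ≤ |y - c|) :
    poissonWeight c a y ≤ 4 * (a * L / δ ^ 2) * poissonWeight c' L y := by
  have hden : 0 < a + |y - c| := by linarith
  have hden' : 0 < L + |y - c'| := by linarith [abs_nonneg (y - c')]
  have hsq : (δ * (L + |y - c'|)) ^ 2 ≤ (2 * L * (a + |y - c|)) ^ 2 := by
    gcongr ?_ ^ 2
    exact mul_add_abs_sub_le ha hδ.le hδL hcc' hy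
  calc poissonWeight c a y
      ≤ a * (2 * L) ^ 2 / (δ * (L + |y - c'|)) ^ 2 := by
        rw [poissonWeight, div_le_div_iff₀ (by positivity) (by positivity), mul_assoc a, ← mul_pow]
        gcongr
    _ = 4 * (a * L / δ ^ 2) * poissonWeight c' L y := by
        rw [poissonWeight]
        field_simp
        ring

theorem poissonI_le_mul_poissonI {μ : Measure ℝ} (ha : 0 ≤ a) (hδ : 0 < δ) (hδL : δ ≤ L / 2)
    (hcc' : |c - c'| ≤ L / 2) (hμ : ∀ᵐ y ∂μ, δ ≤ |y - c|) :
    poissonI c a μ ≤ ENNReal.ofReal (4 * (a * L / δ ^ 2)) * poissonI c' L μ := by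
  have hL : 0 ≤ L := by linarith
  unfold poissonI
  rw [← lintegral_const_mul' _ _ ENNReal.ofReal_ne_top]
  refine lintegral_mono_ae (hμ.mono fun y hy => ?_)
  rw [← ENNReal.ofReal_mul (by positivity)]
  exact ENNReal.ofReal_le_ofReal (poissonWeight_le_mul_poissonWeight ha hδ hδL hcc' hy)

end PoissonComparison

lemma mul_div_sq_rpow_mul_rpow_one_sub {a L : ℝ} (ha : 0 < a) (hL : 0 < L) (ε : ℝ) :
    a * L / (a ^ ε * L ^ (1 - ε)) ^ 2 = (a / L) ^ (1 - 2 * ε) := by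
  have ha_rpow : a ^ (1 - 2 * ε) = a / (a ^ ε) ^ 2 := by
    rw [Real.rpow_sub ha, Real.rpow_one, mul_comm, Real.rpow_mul ha.le, Real.rpow_two]
  have hL_rpow : L ^ (1 - 2 * ε) = (L ^ (1 - ε)) ^ 2 / L := by
    rw [← Real.rpow_two, ← Real.rpow_mul hL.le, ← Real.rpow_sub_one hL.ne']
    ring_nf
  rw [Real.div_rpow ha.le hL.le, ha_rpow, hL_rpow]
  field_simp

namespace DI

lemma len_pos (I : DI) : 0 < I.len := zpow_pos two_pos _

lemma lo_eq_center_sub (I : DI) : I.lo = I.center - I.len / 2 := by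
  unfold lo center len; ring

lemma hi_eq_center_add (I : DI) : I.hi = I.center + I.len / 2 := by
  unfold hi center len; ring

lemma distToBdry_eq_sub_abs_center_sub_center (J I : DI) :
    distToBdry J I = (I.len - J.len) / 2 - |J.center - I.center| := by
  rw [distToBdry, lo_eq_center_sub, lo_eq_center_sub, hi_eq_center_add, hi_eq_center_add]
  grind

lemma distToBdry_le_abs_sub_center {I : DI} {y : ℝ} (J : DI) (hy : y ∉ I.set) :
    distToBdry J I ≤ |y - J.center| := by
  have hI : I.len / 2 ≤ |y - I.center| := by
    have hy' : ¬(I.lo ≤ y ∧ y < I.hi) := hy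
    rw [lo_eq_center_sub, hi_eq_center_add] at hy'
    grind
  linarith [distToBdry_eq_sub_abs_center_sub_center J I, abs_sub_le y J.center I.center, J.len_pos]

theorem poisson_le_of_le_distToBdry {J I : DI} {μ : Measure ℝ} {δ : ℝ} (hμ : μ I.set = 0)
    (hδ : 0 < δ) (hdist : δ ≤ distToBdry J I) :
    J.poisson μ ≤ ENNReal.ofReal (4 * (J.len * I.len / δ ^ 2)) * I.poisson μ := by
  have hdist_eq := distToBdry_eq_sub_abs_center_sub_center J I
  have hJ := J.len_pos
  refine poissonI_le_mul_poissonI hJ.le hδ ?_ ?_ ?_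
  · linarith [abs_nonneg (J.center - I.center)]
  · linarith
  · filter_upwards [measure_eq_zero_iff_ae_notMem.mp hμ] with y hy
    exact hdist.trans (distToBdry_le_abs_sub_center J hy)

end DI

theorem statement1_general {J I : DI} {μ : Measure ℝ} {ε : ℝ} (hμ : μ I.set = 0)
    (hdist : 2 * J.len ^ ε * I.len ^ (1 - ε) ≤ DI.distToBdry J I) :
    J.poisson μ ≤ ENNReal.ofReal ((J.len / I.len) ^ (1 - 2 * ε)) * I.poisson μ := by
  have hJ := J.len_pos
  have hI := I.len_pos
  have hratio : 4 * (J.len * I.len / (2 * J.len ^ ε * I.len ^ (1 - ε)) ^ 2) =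
      (J.len / I.len) ^ (1 - 2 * ε) := by
    rw [← mul_div_sq_rpow_mul_rpow_one_sub hJ hI]
    field_simp
    norm_num
  rw [← hratio]
  exact DI.poisson_le_of_le_distToBdry hμ (by positivity) hdist

/-- Poisson Decay Lemma. -/
theorem statement1 (ε : ℝ) (hε0 : 0 < ε) (hε : ε < 1/2) :
    ∃ C : ℝ, 0 < C ∧
      ∀ (J I K : DI) (μ : Measure ℝ), IsLocallyFiniteMeasure μ →
        J.set ⊆ I.set → I.set ⊆ K.set →
        2 * J.len ^ ε * I.len ^ (1 - ε) < DI.distToBdry J I →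
        J.poisson (μ.restrict (K.set \ I.set)) ≤
          ENNReal.ofReal (C * (J.len / I.len) ^ (1 - 2*ε)) *
            I.poisson (μ.restrict (K.set \ I.set)) := by
  refine ⟨1, one_pos, fun J I K μ _ _ _ hdist => ?_⟩
  rw [one_mul]
  exact statement1_general (by simp [Measure.restrict_apply measurableSet_Ico, DI.set]) hdist.le

end
end

section
/- (Quasi-orthogonality.) Let σ be a positive locally finite Borel measure on ℝ, let T be a dyadic interval, and let ℱ be a collection of dyadic subintervals of T with T ∈ ℱ satisfying the Carleson condition Σ_{F′∈𝔠_ℱ(F)}|F′|_σ ≤ ½·|F|_σ for all F ∈ ℱ. For f ∈ L²(σ) define α_ℱ(F) := sup_{G∈ℱ: G⊇F} E^σ_G|f|, where E^σ_G|f| := (1/|G|_σ)∫_G |f| dσ. Then Σ_{F∈ℱ} |F|_σ·α_ℱ(F)² ≤ C·∫_ℝ |f|² dσ for a universal constant C. -/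
open MeasureTheory Set
open scoped ENNReal Classical

noncomputable section

/-!
The numbers `α_ℱ(F)` are dominated on `F` by the maximal function of `f` over the averaging sets
`ℱ`, so the sum is a Carleson embedding. By the Carleson condition the part `E_F` of `F` outside its
`ℱ`-children carries a fixed proportion of the mass of `F`. The sets `E_F` are disjoint, hence the
sum is at most a multiple of the integral of the squared maximal function. This is bounded by the
`L²` norm of `f`: the dyadic nesting gives the weak type `(1, 1)` inequality with constant one
(cover by maximal intervals), and truncating `f` at half the height upgrades it to strong type.
-/

open scoped Function

section LayerCake

variable {X : Type*} [MeasurableSpace X] {μ : Measure X} {f g : X → ℝ≥0∞} {p : ℝ}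

lemma lintegral_Ioi_ofReal_rpow_eq_top (s : ℝ) :
    ∫⁻ t in Ioi (0 : ℝ), ENNReal.ofReal (t ^ s) = ∞ := by
  have hmeas : AEStronglyMeasurable (fun t : ℝ ↦ t ^ s) (volume.restrict (Ioi 0)) := by
    fun_prop
  have hnonneg : 0 ≤ᵐ[volume.restrict (Ioi 0)] fun t : ℝ ↦ t ^ s :=
    (ae_restrict_mem measurableSet_Ioi).mono fun t ht ↦ Real.rpow_nonneg (le_of_lt ht) s
  by_contra h
  exact not_integrableOn_Ioi_rpow s ((lintegral_ofReal_ne_top_iff_integrable hmeas hnonneg).1 h)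

lemma lintegral_rpow_eq_lintegral_measure_ofReal_lt_mul (hg : AEMeasurable g μ) (hp : 0 < p) :
    ∫⁻ x, g x ^ p ∂μ = ENNReal.ofReal p *
      ∫⁻ t in Ioi (0 : ℝ), μ {x | ENNReal.ofReal t < g x} * ENNReal.ofReal (t ^ (p - 1)) := by
  by_cases hfin : μ {x | g x = ∞} = 0
  · have hne : ∀ᵐ x ∂μ, g x ≠ ∞ := by simpa [ae_iff] using hfin
    calc ∫⁻ x, g x ^ p ∂μ
      _ = ∫⁻ x, ENNReal.ofReal ((g x).toReal ^ p) ∂μ :=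
          lintegral_congr_ae <| hne.mono fun x hx ↦ by
            simp [← ENNReal.ofReal_rpow_of_nonneg, hp.le, ENNReal.ofReal_toReal hx]
      _ = _ := lintegral_rpow_eq_lintegral_meas_lt_mul μ (.of_forall fun _ ↦ ENNReal.toReal_nonneg)
          hg.ennreal_toReal hp
      _ = _ := by
          congr 1
          refine setLIntegral_congr_fun measurableSet_Ioi fun t ht ↦ ?_
          have hlevel : {x | t < (g x).toReal} =ᵐ[μ] {x | ENNReal.ofReal t < g x} :=
            hne.mono fun x hx ↦ propext (ENNReal.ofReal_lt_iff_lt_toReal (le_of_lt ht) hx).symm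
          simp only [measure_congr hlevel]
  · have htop : ∫⁻ t in Ioi (0 : ℝ), μ {x | ENNReal.ofReal t < g x} * ENNReal.ofReal (t ^ (p - 1))
        = ∞ := by
      refine top_le_iff.1 ?_
      calc ∞
        _ = ∫⁻ t in Ioi (0 : ℝ), μ {x | g x = ∞} * ENNReal.ofReal (t ^ (p - 1)) := by
            rw [lintegral_const_mul _ (by fun_prop), lintegral_Ioi_ofReal_rpow_eq_top,
              ENNReal.mul_top hfin]
        _ ≤ _ := by
            gcongr with t x
            intro hx
            simp [hx]
    have hpow : μ {x | g x ^ p = ∞} ≠ 0 := by simpa [ENNReal.rpow_eq_top_iff_of_pos hp] using hfin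
    rw [htop, ENNReal.mul_top (by simpa using hp),
      lintegral_eq_top_of_measure_eq_top_ne_zero (hg.pow_const p) hpow]

lemma lintegral_rpow_le_of_mul_measure_lt_le (hf : AEMeasurable f μ) (hg : AEMeasurable g μ)
    (hp : 1 < p)
    (h : ∀ t : ℝ, 0 < t → ENNReal.ofReal t * μ {x | ENNReal.ofReal t < g x} ≤
      ∫⁻ x in {x | ENNReal.ofReal t < f x}, f x ∂μ) :
    ∫⁻ x, g x ^ p ∂μ ≤ ENNReal.ofReal (p / (p - 1)) * ∫⁻ x, f x ^ p ∂μ := by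
  have hp' : 0 < p - 1 := sub_pos.2 hp
  -- Measuring the level sets of `f` by `f μ` puts both sides in layer cake form.
  set ν := μ.withDensity f
  have hfν : AEMeasurable f ν := hf.mono_ac (withDensity_absolutelyContinuous μ f)
  have hlevel : ∀ t ∈ Ioi (0 : ℝ), μ {x | ENNReal.ofReal t < g x} * ENNReal.ofReal (t ^ (p - 1)) ≤
      ν {x | ENNReal.ofReal t < f x} * ENNReal.ofReal (t ^ (p - 1 - 1)) := by
    intro t ht
    have hsplit : ENNReal.ofReal (t ^ (p - 1)) =
        ENNReal.ofReal t * ENNReal.ofReal (t ^ (p - 1 - 1)) := by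
      rw [← ENNReal.ofReal_mul (le_of_lt ht), Real.rpow_sub_one (ne_of_gt ht) (p - 1),
        mul_div_cancel₀ _ (ne_of_gt ht)]
    rw [hsplit, ← mul_assoc, mul_comm (μ _),
      withDensity_apply₀ f (nullMeasurableSet_lt aemeasurable_const hf)]
    gcongr
    exact h t ht
  calc ∫⁻ x, g x ^ p ∂μ
    _ = ENNReal.ofReal p *
          ∫⁻ t in Ioi (0 : ℝ), μ {x | ENNReal.ofReal t < g x} * ENNReal.ofReal (t ^ (p - 1)) :=
        lintegral_rpow_eq_lintegral_measure_ofReal_lt_mul hg (zero_lt_one.trans hp)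
    _ ≤ ENNReal.ofReal p * ∫⁻ t in Ioi (0 : ℝ),
          ν {x | ENNReal.ofReal t < f x} * ENNReal.ofReal (t ^ (p - 1 - 1)) := by
        gcongr ENNReal.ofReal p * ?_
        exact setLIntegral_mono' measurableSet_Ioi hlevel
    _ = ENNReal.ofReal (p / (p - 1)) * ∫⁻ x, f x ^ (p - 1) ∂ν := by
        rw [lintegral_rpow_eq_lintegral_measure_ofReal_lt_mul hfν hp', ← mul_assoc,
          ← ENNReal.ofReal_mul (by positivity), div_mul_cancel₀ _ hp'.ne']
    _ = ENNReal.ofReal (p / (p - 1)) * ∫⁻ x, f x ^ p ∂μ := by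
        rw [lintegral_withDensity_eq_lintegral_mul₀ hf (hf.pow_const _)]
        congr 2 with x
        simpa using (ENNReal.rpow_add_of_nonneg (x := f x) 1 (p - 1) zero_le_one hp'.le).symm

end LayerCake

section Laminar

variable {X : Type*}

/-- A laminar (nested) family of sets: any two members are comparable or disjoint. Dyadic intervals
are the motivating example. -/
def IsLaminar (𝒢 : Set (Set X)) : Prop :=
  ∀ ⦃G⦄, G ∈ 𝒢 → ∀ ⦃H⦄, H ∈ 𝒢 → G ⊆ H ∨ H ⊆ G ∨ Disjoint G H

namespace IsLaminar

variable {𝒢 ℋ : Set (Set X)}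

lemma mono (h𝒢 : IsLaminar 𝒢) (hℋ : ℋ ⊆ 𝒢) : IsLaminar ℋ :=
  fun _ hG _ hH ↦ h𝒢 (hℋ hG) (hℋ hH)

lemma pairwise_disjoint_maximal (h𝒢 : IsLaminar 𝒢) :
    {G | Maximal (· ∈ 𝒢) G}.Pairwise Disjoint := by
  intro G hG H hH hne
  rcases h𝒢 hG.prop hH.prop with hle | hle | hdisj
  · exact absurd (hG.eq_of_le hH.prop hle) hne
  · exact absurd (hH.eq_of_le hG.prop hle).symm hne
  · exact hdisj

variable [MeasurableSpace X] {μ : Measure X} {f : X → ℝ≥0∞} {c : ℝ≥0∞}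

lemma mul_measure_sUnion_le_of_finite (h𝒢 : IsLaminar 𝒢) (hfin : 𝒢.Finite)
    (hmeas : ∀ G ∈ 𝒢, MeasurableSet G) (hc : ∀ G ∈ 𝒢, c * μ G ≤ ∫⁻ x in G, f x ∂μ) :
    c * μ (⋃₀ 𝒢) ≤ ∫⁻ x, f x ∂μ := by
  set ℳ := {G | Maximal (· ∈ 𝒢) G}
  have hℳ𝒢 : ℳ ⊆ 𝒢 := fun _ hG ↦ hG.prop
  have hℳ : ℳ.Countable := (hfin.subset hℳ𝒢).countable
  have hℳmeas : ∀ G ∈ ℳ, MeasurableSet G := fun G hG ↦ hmeas G (hℳ𝒢 hG)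
  have hdisj : ℳ.Pairwise Disjoint := h𝒢.pairwise_disjoint_maximal
  have hcover : ⋃₀ 𝒢 ⊆ ⋃₀ ℳ := sUnion_subset fun G hG ↦
    let ⟨_, hle, hmax⟩ := hfin.exists_le_maximal hG
    hle.trans (subset_sUnion_of_mem hmax)
  calc c * μ (⋃₀ 𝒢)
    _ ≤ c * μ (⋃₀ ℳ) := by gcongr
    _ = ∑' G : ℳ, c * μ G := by rw [measure_sUnion hℳ hdisj hℳmeas, ENNReal.tsum_mul_left]
    _ ≤ ∑' G : ℳ, ∫⁻ x in (G : Set X), f x ∂μ := ENNReal.tsum_le_tsum fun G ↦ hc G (hℳ𝒢 G.2)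
    _ = ∫⁻ x in ⋃ G ∈ ℳ, G, f x ∂μ := (lintegral_biUnion hℳ hℳmeas hdisj f).symm
    _ ≤ ∫⁻ x, f x ∂μ := setLIntegral_le_lintegral _ _

lemma mul_measure_sUnion_le (h𝒢 : IsLaminar 𝒢) (hcount : 𝒢.Countable)
    (hmeas : ∀ G ∈ 𝒢, MeasurableSet G) (hc : ∀ G ∈ 𝒢, c * μ G ≤ ∫⁻ x in G, f x ∂μ) :
    c * μ (⋃₀ 𝒢) ≤ ∫⁻ x, f x ∂μ := by
  -- `𝒢` may have no maximal members, so exhaust it by its finite subfamilies.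
  set 𝒮 := {ℋ : Set (Set X) | ℋ.Finite ∧ ℋ ⊆ 𝒢}
  have h𝒮 : 𝒮.Countable := countable_ofPred_finite_subset hcount
  have hexhaust : ⋃₀ 𝒢 ⊆ ⋃ ℋ ∈ 𝒮, ⋃₀ ℋ := by
    rintro x ⟨G, hG, hx⟩
    exact mem_biUnion (x := {G}) ⟨finite_singleton G, singleton_subset_iff.2 hG⟩ (by simpa using hx)
  have hdir : DirectedOn ((· ⊆ ·) on (sUnion : Set (Set X) → Set X)) 𝒮 := fun ℋ₁ h₁ ℋ₂ h₂ ↦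
    ⟨ℋ₁ ∪ ℋ₂, ⟨h₁.1.union h₂.1, union_subset h₁.2 h₂.2⟩,
      sUnion_mono subset_union_left, sUnion_mono subset_union_right⟩
  calc c * μ (⋃₀ 𝒢)
    _ ≤ c * μ (⋃ ℋ ∈ 𝒮, ⋃₀ ℋ) := by gcongr
    _ = ⨆ ℋ ∈ 𝒮, c * μ (⋃₀ ℋ) := by
        simp only [measure_biUnion_eq_iSup h𝒮 hdir, ENNReal.mul_iSup]
    _ ≤ ∫⁻ x, f x ∂μ := iSup₂_le fun ℋ hℋ ↦ (h𝒢.mono hℋ.2).mul_measure_sUnion_le_of_finite hℋ.1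
        (fun G hG ↦ hmeas G (hℋ.2 hG)) fun G hG ↦ hc G (hℋ.2 hG)

end IsLaminar

end Laminar

section MaximalFunction

variable {X : Type*} [MeasurableSpace X] {μ : Measure X} {𝒢 : Set (Set X)} {f : X → ℝ≥0∞}

/-- The maximal function of `f` over the family `𝒢`: the supremum of the `μ`-averages of `f` over
the members of `𝒢` containing the given point. Averages over sets of measure `0` or `∞` are `0`. -/
def maximalFunction (μ : Measure X) (𝒢 : Set (Set X)) (f : X → ℝ≥0∞) (x : X) : ℝ≥0∞ :=
  ⨆ G ∈ 𝒢, G.indicator (fun _ ↦ ⨍⁻ y in G, f y ∂μ) x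

lemma measurable_maximalFunction (hcount : 𝒢.Countable) (hmeas : ∀ G ∈ 𝒢, MeasurableSet G) :
    Measurable (maximalFunction μ 𝒢 f) :=
  .biSup 𝒢 hcount fun G hG ↦ measurable_const.indicator (hmeas G hG)

lemma setLAverage_le_maximalFunction {G : Set X} (hG : G ∈ 𝒢) {x : X} (hx : x ∈ G) :
    ⨍⁻ y in G, f y ∂μ ≤ maximalFunction μ 𝒢 f x :=
  le_iSup₂_of_le G hG (by rw [indicator_of_mem hx])

lemma setOf_lt_maximalFunction (c : ℝ≥0∞) :
    {x | c < maximalFunction μ 𝒢 f x} = ⋃₀ {G ∈ 𝒢 | c < ⨍⁻ y in G, f y ∂μ} := by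
  ext x
  simp only [maximalFunction, mem_ofPred_eq, lt_iSup_iff, mem_sUnion]
  refine exists_congr fun G ↦ ?_
  by_cases hx : x ∈ G <;> simp [hx]

lemma mul_measure_lt_maximalFunction_le (h𝒢 : IsLaminar 𝒢) (hcount : 𝒢.Countable)
    (hmeas : ∀ G ∈ 𝒢, MeasurableSet G) (c : ℝ≥0∞) :
    c * μ {x | c < maximalFunction μ 𝒢 f x} ≤ ∫⁻ x, f x ∂μ := by
  rw [setOf_lt_maximalFunction]
  refine (h𝒢.mono (sep_subset 𝒢 _)).mul_measure_sUnion_le (hcount.mono (sep_subset 𝒢 _))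
    (fun G hG ↦ hmeas G hG.1) fun G hG ↦ ?_
  exact ENNReal.mul_le_of_le_div (setLAverage_eq μ f G ▸ hG.2.le)

lemma setLAverage_le_add_setLAverage_indicator (c : ℝ≥0∞) (G : Set X) :
    ⨍⁻ x in G, f x ∂μ ≤ c + ⨍⁻ x in G, {x | c < f x}.indicator f x ∂μ := by
  have hpointwise : ∀ x, f x ≤ c + {x | c < f x}.indicator f x := by
    intro x
    by_cases hx : c < f x
    · simp [hx]
    · simpa [hx] using not_lt.1 hx
  calc ⨍⁻ x in G, f x ∂μ
    _ ≤ ⨍⁻ x in G, (c + {x | c < f x}.indicator f x) ∂μ := lintegral_mono hpointwise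
    _ = ⨍⁻ _ in G, c ∂μ + ⨍⁻ x in G, {x | c < f x}.indicator f x ∂μ :=
        lintegral_add_left measurable_const _
    _ ≤ c + ⨍⁻ x in G, {x | c < f x}.indicator f x ∂μ := by
        gcongr
        rw [setLAverage_eq, setLIntegral_const, mul_div_assoc]
        exact mul_le_of_le_one_right' ENNReal.div_self_le_one

lemma maximalFunction_le_add_maximalFunction_indicator (c : ℝ≥0∞) (x : X) :
    maximalFunction μ 𝒢 f x ≤ c + maximalFunction μ 𝒢 ({x | c < f x}.indicator f) x := by
  refine iSup₂_le fun G hG ↦ indicator_apply_le' (fun hx ↦ ?_) fun _ ↦ zero_le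
  exact (setLAverage_le_add_setLAverage_indicator c G).trans
    (add_le_add_right (setLAverage_le_maximalFunction hG hx) c)

lemma mul_measure_two_mul_lt_maximalFunction_le (h𝒢 : IsLaminar 𝒢) (hcount : 𝒢.Countable)
    (hmeas : ∀ G ∈ 𝒢, MeasurableSet G) (hf : AEMeasurable f μ) (c : ℝ≥0∞) :
    c * μ {x | 2 * c < maximalFunction μ 𝒢 f x} ≤ ∫⁻ x in {x | c < f x}, f x ∂μ := by
  calc c * μ {x | 2 * c < maximalFunction μ 𝒢 f x}
    _ ≤ c * μ {x | c < maximalFunction μ 𝒢 ({x | c < f x}.indicator f) x} := by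
        gcongr c * μ ?_
        intro x (hx : 2 * c < maximalFunction μ 𝒢 f x)
        rw [two_mul] at hx
        exact lt_of_add_lt_add_left
          (hx.trans_le (maximalFunction_le_add_maximalFunction_indicator c x))
    _ ≤ ∫⁻ x, {x | c < f x}.indicator f x ∂μ :=
        mul_measure_lt_maximalFunction_le h𝒢 hcount hmeas c
    _ = ∫⁻ x in {x | c < f x}, f x ∂μ :=
        lintegral_indicator₀ (nullMeasurableSet_lt aemeasurable_const hf) f

theorem lintegral_maximalFunction_rpow_le (h𝒢 : IsLaminar 𝒢) (hcount : 𝒢.Countable)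
    (hmeas : ∀ G ∈ 𝒢, MeasurableSet G) (hf : AEMeasurable f μ) {p : ℝ} (hp : 1 < p) :
    ∫⁻ x, maximalFunction μ 𝒢 f x ^ p ∂μ ≤
      2 ^ p * ENNReal.ofReal (p / (p - 1)) * ∫⁻ x, f x ^ p ∂μ := by
  have hp₀ : 0 ≤ p := zero_le_one.trans hp.le
  have hM : Measurable (maximalFunction μ 𝒢 f) := measurable_maximalFunction hcount hmeas
  have hhalf : ∫⁻ x, (maximalFunction μ 𝒢 f x / 2) ^ p ∂μ ≤
      ENNReal.ofReal (p / (p - 1)) * ∫⁻ x, f x ^ p ∂μ := by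
    refine lintegral_rpow_le_of_mul_measure_lt_le hf (hM.div_const 2).aemeasurable hp fun t _ ↦ ?_
    simpa only [ENNReal.lt_div_iff_mul_lt (.inl two_ne_zero) (.inl ENNReal.ofNat_ne_top),
      mul_comm _ (2 : ℝ≥0∞)] using
      mul_measure_two_mul_lt_maximalFunction_le h𝒢 hcount hmeas hf (ENNReal.ofReal t)
  calc ∫⁻ x, maximalFunction μ 𝒢 f x ^ p ∂μ
    _ = 2 ^ p * ∫⁻ x, (maximalFunction μ 𝒢 f x / 2) ^ p ∂μ := by
        rw [← lintegral_const_mul _ ((hM.div_const 2).pow_const p)]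
        congr with x
        rw [← ENNReal.mul_rpow_of_nonneg _ _ hp₀,
          ENNReal.mul_div_cancel two_ne_zero ENNReal.ofNat_ne_top]
    _ ≤ _ := by
        rw [mul_assoc]
        gcongr

end MaximalFunction

lemma tsum_measure_mul_le_of_pairwise_disjoint {X ι : Type*} [MeasurableSpace X] [Countable ι]
    {μ : Measure X} {s E : ι → Set X} {K : ℝ≥0∞} {a : ι → ℝ≥0∞} {g : X → ℝ≥0∞}
    (hE : ∀ i, MeasurableSet (E i)) (hdisj : Pairwise (Disjoint on E))
    (hsE : ∀ i, μ (s i) ≤ K * μ (E i)) (hag : ∀ i, ∀ x ∈ E i, a i ≤ g x) :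
    ∑' i, μ (s i) * a i ≤ K * ∫⁻ x, g x ∂μ := by
  calc ∑' i, μ (s i) * a i
    _ ≤ ∑' i, K * ∫⁻ x in E i, g x ∂μ := by
        refine ENNReal.tsum_le_tsum fun i ↦ ?_
        calc μ (s i) * a i
          _ ≤ K * μ (E i) * a i := by gcongr; exact hsE i
          _ = K * ∫⁻ _ in E i, a i ∂μ := by rw [setLIntegral_const, mul_assoc, mul_comm (a i)]
          _ ≤ K * ∫⁻ x in E i, g x ∂μ := by
              gcongr K * ?_
              exact setLIntegral_mono' (hE i) (hag i)
    _ = K * ∫⁻ x in ⋃ i, E i, g x ∂μ := by rw [ENNReal.tsum_mul_left, lintegral_iUnion hE hdisj]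
    _ ≤ K * ∫⁻ x, g x ∂μ := by
        gcongr
        exact Measure.restrict_le_self

namespace DI

variable {F G H : DI} {ℱ : Set DI} {x : ℝ}

instance : Countable DI :=
  Function.Injective.countable (f := fun I : DI ↦ (I.k, I.n)) fun ⟨_, _⟩ ⟨_, _⟩ h ↦ by simp_all

lemma measurableSet_set (I : DI) : MeasurableSet I.set := measurableSet_Ico

lemma lo_lt_hi (I : DI) : I.lo < I.hi := by
  have : (0 : ℝ) < 2 ^ I.k := by positivity
  simp only [lo, hi]
  linarith

lemma mem_set_iff_floor (I : DI) : x ∈ I.set ↔ ⌊x / 2 ^ I.k⌋ = I.n := by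
  have hpos : (0 : ℝ) < 2 ^ I.k := by positivity
  rw [Int.floor_eq_iff, le_div_iff₀ hpos, div_lt_iff₀ hpos, set, mem_Ico]

lemma set_subset_set_of_mem (hk : G.k ≤ H.k) (hxG : x ∈ G.set) (hxH : x ∈ H.set) :
    G.set ⊆ H.set := by
  obtain ⟨d, hd⟩ := Int.le.dest hk
  have hfloor : ∀ z : ℝ, ⌊z / 2 ^ H.k⌋ = ⌊z / 2 ^ G.k⌋ / (2 ^ d : ℕ) := fun z ↦ by
    rw [← Int.floor_div_natCast, ← hd, zpow_add₀ two_ne_zero, div_div, zpow_natCast]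
    push_cast
    rfl
  intro y hyG
  rw [mem_set_iff_floor] at *
  rw [hfloor, hyG, ← hxG, ← hfloor, hxH]

lemma subset_or_subset_or_disjoint (G H : DI) :
    G.set ⊆ H.set ∨ H.set ⊆ G.set ∨ Disjoint G.set H.set := by
  by_cases hdisj : Disjoint G.set H.set
  · exact .inr (.inr hdisj)
  obtain ⟨x, hxG, hxH⟩ := not_disjoint_iff.1 hdisj
  rcases le_total G.k H.k with hk | hk
  · exact .inl (set_subset_set_of_mem hk hxG hxH)
  · exact .inr (.inl (set_subset_set_of_mem hk hxH hxG))

lemma isLaminar_image_set (ℱ : Set DI) : IsLaminar (set '' ℱ) := by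
  rintro _ ⟨G, -, rfl⟩ _ ⟨H, -, rfl⟩
  exact subset_or_subset_or_disjoint G H

lemma k_le_k_of_subset (h : G.set ⊆ H.set) : G.k ≤ H.k := by
  obtain ⟨hlo, hhi⟩ : H.lo ≤ G.lo ∧ G.hi ≤ H.hi := (Ico_subset_Ico_iff G.lo_lt_hi).1 h
  simp only [lo, hi] at hlo hhi
  have : (2 : ℝ) ^ G.k ≤ 2 ^ H.k := by linarith
  exact (zpow_le_zpow_iff_right₀ one_lt_two).1 this

lemma eq_of_subset_of_k_le (h : G.set ⊆ H.set) (hk : H.k ≤ G.k) : G = H := by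
  have hk' : G.k = H.k := (k_le_k_of_subset h).antisymm hk
  have hlo : G.lo ∈ G.set := left_mem_Ico.2 G.lo_lt_hi
  have hn : G.n = H.n := by
    rw [← (mem_set_iff_floor G).1 hlo, ← (mem_set_iff_floor H).1 (h hlo), hk']
  cases G
  cases H
  simp_all

lemma set_injective : Function.Injective set := fun _ _ h ↦
  eq_of_subset_of_k_le h.subset (k_le_k_of_subset h.symm.subset)

lemma exists_mem_fChildren_superset (hG : G ∈ ℱ) (hGF : G.set ⊂ F.set) :
    ∃ H ∈ fChildren ℱ F, G.set ⊆ H.set := by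
  obtain ⟨_, ⟨H, hH, hHF, hGH, rfl⟩, hmax⟩ := Int.exists_greatest_of_bdd
    (P := fun k ↦ ∃ H ∈ ℱ, H.set ⊂ F.set ∧ G.set ⊆ H.set ∧ H.k = k)
    ⟨F.k, by rintro _ ⟨H, -, hHF, -, rfl⟩; exact k_le_k_of_subset hHF.subset⟩
    ⟨G.k, G, hG, hGF, subset_rfl, rfl⟩
  refine ⟨H, ⟨hH, hHF, fun K hK hKF hHK ↦ ?_⟩, hGH⟩
  exact (eq_of_subset_of_k_le hHK (hmax _ ⟨K, hK, hKF, hGH.trans hHK, rfl⟩)).symm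

/-- The part `E_F` of `F` not covered by its `ℱ`-children. -/
def outsideChildren (ℱ : Set DI) (F : DI) : Set ℝ := F.set \ ⋃ G : fChildren ℱ F, (G : DI).set

lemma measurableSet_outsideChildren (ℱ : Set DI) (F : DI) :
    MeasurableSet (outsideChildren ℱ F) :=
  F.measurableSet_set.diff (.iUnion fun G ↦ measurableSet_set G)

lemma disjoint_outsideChildren_of_ssubset (hG : G ∈ ℱ) (hGF : G.set ⊂ F.set) :
    Disjoint (outsideChildren ℱ F) G.set := by
  obtain ⟨H, hH, hGH⟩ := exists_mem_fChildren_superset hG hGF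
  exact disjoint_sdiff_left.mono_right
    (hGH.trans (subset_iUnion (fun G : fChildren ℱ F ↦ (G : DI).set) ⟨H, hH⟩))

lemma pairwise_disjoint_outsideChildren (ℱ : Set DI) :
    Pairwise (Disjoint on fun F : ℱ ↦ outsideChildren ℱ F) := by
  rintro ⟨F, hF⟩ ⟨G, hG⟩ hne
  have hne' : F.set ≠ G.set := fun h ↦ hne (Subtype.ext (set_injective h))
  rcases subset_or_subset_or_disjoint F G with hFG | hGF | hdisj
  · exact ((disjoint_outsideChildren_of_ssubset hF (hFG.ssubset_of_ne hne')).mono_right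
      sdiff_subset).symm
  · exact (disjoint_outsideChildren_of_ssubset hG (hGF.ssubset_of_ne hne'.symm)).mono_right
      sdiff_subset
  · exact hdisj.mono sdiff_subset sdiff_subset

lemma measure_le_mul_measure_outsideChildren {σ : Measure ℝ} [IsLocallyFiniteMeasure σ]
    {η : ℝ≥0∞} (hη : η < 1) (h : ∑' G : fChildren ℱ F, σ (G : DI).set ≤ η * σ F.set) :
    σ F.set ≤ (1 - η)⁻¹ * σ (outsideChildren ℱ F) := by
  have hfin : σ F.set ≠ ∞ := measure_Ico_lt_top.ne
  have hpos : 1 - η ≠ 0 := (tsub_pos_of_lt hη).ne'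
  have htop : 1 - η ≠ ∞ := ENNReal.sub_ne_top ENNReal.one_ne_top
  rw [← ENNReal.div_eq_inv_mul, ENNReal.le_div_iff_mul_le (.inl hpos) (.inl htop)]
  calc σ F.set * (1 - η)
    _ = σ F.set - η * σ F.set := by
        rw [mul_comm, ENNReal.sub_mul fun _ _ ↦ hfin, one_mul]
    _ ≤ σ F.set - σ (⋃ G : fChildren ℱ F, (G : DI).set) := by
        gcongr
        exact (measure_iUnion_le _).trans h
    _ ≤ σ (outsideChildren ℱ F) := le_measure_sdiff

end DI

lemma ofReal_avg_abs_le_setLAverage {σ : Measure ℝ} (K : Set ℝ) (f : ℝ → ℝ) :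
    ENNReal.ofReal (avg σ K fun x ↦ |f x|) ≤ ⨍⁻ x in K, ‖f x‖ₑ ∂σ := by
  have havg : avg σ K (fun x ↦ |f x|) = ⨍ x in K, |f x| ∂σ := by
    rw [avg, setAverage_eq, smul_eq_mul, Measure.real, div_eq_inv_mul]
  rw [havg]
  by_cases hint : IntegrableOn (fun x ↦ |f x|) K σ
  · rw [ofReal_setAverage hint (.of_forall fun x ↦ abs_nonneg (f x)), setLAverage_eq]
    simp only [Real.enorm_eq_ofReal_abs, le_refl]
  · rw [setAverage_eq, integral_undef hint]
    simp

lemma ofReal_alphaF_le_maximalFunction {σ : Measure ℝ} {ℱ : Set DI} {f : ℝ → ℝ} {F : DI} {x : ℝ}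
    (hx : x ∈ F.set) :
    ENNReal.ofReal (alphaF σ ℱ f F) ≤ maximalFunction σ (DI.set '' ℱ) (‖f ·‖ₑ) x := by
  by_cases htop : maximalFunction σ (DI.set '' ℱ) (‖f ·‖ₑ) x = ∞
  · simp [htop]
  refine ENNReal.ofReal_le_of_le_toReal (Real.iSup_le (fun ⟨G, hG, hFG⟩ ↦ ?_) ENNReal.toReal_nonneg)
  refine (ENNReal.ofReal_le_iff_le_toReal htop).1 ?_
  exact (ofReal_avg_abs_le_setLAverage G.set f).trans
    (setLAverage_le_maximalFunction (mem_image_of_mem _ hG) (hFG hx))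

theorem statement7_general {σ : Measure ℝ} [IsLocallyFiniteMeasure σ] {ℱ : Set DI} {η : ℝ≥0∞}
    (hη : η < 1) (hℱ : ∀ F ∈ ℱ, ∑' G : fChildren ℱ F, σ (G : DI).set ≤ η * σ F.set)
    {p : ℝ} (hp : 1 < p) {f : ℝ → ℝ} (hf : AEMeasurable f σ) :
    ∑' F : ℱ, σ (F : DI).set * ENNReal.ofReal (alphaF σ ℱ f F) ^ p ≤
      (1 - η)⁻¹ * (2 ^ p * ENNReal.ofReal (p / (p - 1))) * ∫⁻ x, ‖f x‖ₑ ^ p ∂σ := by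
  have hdominated : ∀ F : ℱ, ∀ x ∈ DI.outsideChildren ℱ F,
      ENNReal.ofReal (alphaF σ ℱ f F) ^ p ≤ maximalFunction σ (DI.set '' ℱ) (‖f ·‖ₑ) x ^ p :=
    fun F x hx ↦ ENNReal.rpow_le_rpow (ofReal_alphaF_le_maximalFunction hx.1) (by linarith)
  calc ∑' F : ℱ, σ (F : DI).set * ENNReal.ofReal (alphaF σ ℱ f F) ^ p
    _ ≤ (1 - η)⁻¹ * ∫⁻ x, maximalFunction σ (DI.set '' ℱ) (‖f ·‖ₑ) x ^ p ∂σ :=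
        tsum_measure_mul_le_of_pairwise_disjoint
          (fun F ↦ DI.measurableSet_outsideChildren ℱ F) (DI.pairwise_disjoint_outsideChildren ℱ)
          (fun F ↦ DI.measure_le_mul_measure_outsideChildren hη (hℱ F F.2)) hdominated
    _ ≤ _ := by
        rw [mul_assoc]
        gcongr
        exact lintegral_maximalFunction_rpow_le (DI.isLaminar_image_set ℱ)
          (to_countable ℱ |>.image _) (forall_mem_image.2 fun F _ ↦ F.measurableSet_set)
          hf.enorm hp

/-- Quasi-orthogonality. -/
theorem statement7 :
    ∃ C : ℝ, 0 < C ∧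
      ∀ (σ : Measure ℝ), IsLocallyFiniteMeasure σ →
      ∀ (T : DI) (ℱ : Set DI), T ∈ ℱ → (∀ F ∈ ℱ, DI.set F ⊆ T.set) →
        (∀ F ∈ ℱ, ∑' G : fChildren ℱ F, σ (G : DI).set ≤ σ (DI.set F) / 2) →
      ∀ f : ℝ → ℝ, MeasureTheory.MemLp f 2 σ →
        ∑' F : ℱ, σ (F : DI).set * ENNReal.ofReal (alphaF σ ℱ f (F : DI)) ^ 2 ≤
          ENNReal.ofReal C * ∫⁻ x, ENNReal.ofReal (f x ^ 2) ∂σ := by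
  refine ⟨16, by norm_num, fun σ _ T ℱ _ _ hℱ f hf ↦ ?_⟩
  have hconst : (1 - 2⁻¹ : ℝ≥0∞)⁻¹ * (2 ^ 2 * ENNReal.ofReal (2 / (2 - 1))) =
      ENNReal.ofReal 16 := by
    rw [ENNReal.one_sub_inv_two, inv_inv]
    norm_num
  have hsq : ∀ x, ‖f x‖ₑ ^ (2 : ℝ) = ENNReal.ofReal (f x ^ 2) := fun x ↦ by
    rw [ENNReal.rpow_two, Real.enorm_eq_ofReal_abs, ← ENNReal.ofReal_pow (abs_nonneg _), sq_abs]
  simpa only [hconst, hsq, ENNReal.rpow_two] using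
    statement7_general (ENNReal.inv_lt_one.2 ENNReal.one_lt_two)
      (fun F hF ↦ (hℱ F hF).trans_eq ENNReal.div_eq_inv_mul) one_lt_two hf.1.aemeasurable

end
end

section
/- (Control of the energy characteristic by Hilbert transform testing and the offset Muckenhoupt characteristic.) There is a universal constant C such that for all positive locally finite Borel measures σ, ω on ℝ, ℰ₂(σ,ω)² ≤ C·(𝔗_H(σ,ω)² + A₂^offset(σ,ω)). -/
open MeasureTheory Set
open scoped ENNReal Classical

noncomputable section

/-!
The offset Muckenhoupt term can be dropped: testing alone controls the energy. For `x < x'` in an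
interval `J` and `y ∉ J` the Hilbert kernel is monotone,
`1/(y - x') - 1/(y - x) = (x' - x) / ((y - x') (y - x)) ≥ (x' - x) / (ℓ(J) + |y - c_J|)²`,
so for a measure `ν` living off `J` the increments of `Hν` on `J` dominate those of the linear
function `x ↦ P(J,ν) x / ℓ(J)`, at least in the limit of vanishing truncation. Comparing variances
over `J`, `P(J,ν)² E(J,ω)² |J|_ω` is at most a constant times `∫_J |Hν|² dω`. With
`ν = 1_{I∖J} σ` one splits `Hν = H(1_I σ) - H(1_J σ)`, applies testing to `I` and to `J`, and sums
over the disjoint intervals `J`.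
-/

section SquareIntegrals

open Filter Topology

lemma enorm_sub_sq_le (u v : ℝ) : ‖u - v‖ₑ ^ 2 ≤ 2 * ‖u‖ₑ ^ 2 + 2 * ‖v‖ₑ ^ 2 := by
  calc ‖u - v‖ₑ ^ 2 ≤ (‖u‖ₑ + ‖v‖ₑ) ^ 2 := by gcongr; exact enorm_sub_le
    _ ≤ 2 * (‖u‖ₑ ^ 2 + ‖v‖ₑ ^ 2) := by
      have h := ENNReal.rpow_add_le_mul_rpow_add_rpow ‖u‖ₑ ‖v‖ₑ one_le_two
      norm_num at h
      exact h
    _ = 2 * ‖u‖ₑ ^ 2 + 2 * ‖v‖ₑ ^ 2 := mul_add _ _ _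

lemma enorm_sq_eq_ofReal_sq (u : ℝ) : ‖u‖ₑ ^ 2 = ENNReal.ofReal (u ^ 2) := by
  rw [Real.enorm_eq_ofReal_abs, ← ENNReal.ofReal_pow (abs_nonneg u), sq_abs]

lemma tsum_liminf_le_liminf_tsum {ι κ : Type*} {l : Filter ι} [l.IsCountablyGenerated]
    (u : ι → κ → ℝ≥0∞) :
    ∑' k, liminf (fun i => u i k) l ≤ liminf (fun i => ∑' k, u i k) l := by
  let : MeasurableSpace κ := ⊤
  simpa only [lintegral_count] using
    lintegral_liminf_le (μ := Measure.count) (f := u) (u := l) fun _ => measurable_from_top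

variable {α : Type*} [MeasurableSpace α] {μ : Measure α}

lemma lintegral_enorm_sq_eq_eLpNorm_sq (f : α → ℝ) :
    ∫⁻ x, ‖f x‖ₑ ^ 2 ∂μ = eLpNorm f 2 μ ^ 2 := by
  simpa using (eLpNorm_nnreal_pow_eq_lintegral (f := f) (μ := μ) (p := 2) two_ne_zero).symm

variable [IsFiniteMeasure μ]

lemma integral_sub_const_sq {f : α → ℝ} (hf : MemLp f 2 μ) (c : ℝ) :
    ∫ x, (f x - c) ^ 2 ∂μ
      = ∫ x, (f x - ⨍ z, f z ∂μ) ^ 2 ∂μ + μ.real univ * ((⨍ z, f z ∂μ) - c) ^ 2 := by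
  set m := ⨍ z, f z ∂μ
  have hdev : MemLp (fun x => f x - m) 2 μ := hf.sub (memLp_const m)
  have hsq : Integrable (fun x => (f x - m) ^ 2) μ := hdev.integrable_sq
  have hlin : Integrable (fun x => 2 * (m - c) * (f x - m)) μ :=
    (hdev.integrable one_le_two).const_mul _
  have hsum : Integrable (fun x => (f x - m) ^ 2 + 2 * (m - c) * (f x - m)) μ := hsq.add hlin
  calc ∫ x, (f x - c) ^ 2 ∂μ
      = ∫ x, ((f x - m) ^ 2 + 2 * (m - c) * (f x - m) + (m - c) ^ 2) ∂μ := by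
        congr 1 with x; ring
    _ = ∫ x, (f x - m) ^ 2 ∂μ + 2 * (m - c) * ∫ x, (f x - m) ∂μ
          + μ.real univ * (m - c) ^ 2 := by
        rw [integral_add hsum (integrable_const _), integral_add hsq hlin, integral_const_mul,
          integral_const, smul_eq_mul]
    _ = ∫ x, (f x - m) ^ 2 ∂μ + μ.real univ * (m - c) ^ 2 := by
        rw [integral_sub_average, mul_zero, add_zero]

lemma lintegral_enorm_sub_average_sq_le {f : α → ℝ} (hf : AEStronglyMeasurable f μ) (c : ℝ) :
    ∫⁻ x, ‖f x - ⨍ z, f z ∂μ‖ₑ ^ 2 ∂μ ≤ ∫⁻ x, ‖f x - c‖ₑ ^ 2 ∂μ := by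
  by_cases hL2 : MemLp f 2 μ
  · have hsq (d : ℝ) :
        ∫⁻ x, ‖f x - d‖ₑ ^ 2 ∂μ = ENNReal.ofReal (∫ x, (f x - d) ^ 2 ∂μ) := by
      simp only [enorm_sq_eq_ofReal_sq]
      exact (ofReal_integral_eq_lintegral_ofReal (hL2.sub (memLp_const d)).integrable_sq
        (ae_of_all _ fun x => sq_nonneg _)).symm
    rw [hsq, hsq, integral_sub_const_sq hL2 c]
    exact ENNReal.ofReal_le_ofReal (le_add_of_nonneg_right (by positivity))
  · have htop : eLpNorm (fun x => f x - c) 2 μ = ⊤ := by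
      by_contra hne
      have hsub : MemLp (fun x => f x - c) 2 μ :=
        ⟨hf.sub aestronglyMeasurable_const, lt_top_iff_ne_top.2 hne⟩
      exact hL2 (by simpa [Pi.add_def] using hsub.add (memLp_const c))
    simp [lintegral_enorm_sq_eq_eLpNorm_sq, htop]

lemma measure_univ_mul_lintegral_enorm_sub_average_sq_le {f : α → ℝ} (hf : Measurable f) :
    μ univ * ∫⁻ x, ‖f x - ⨍ z, f z ∂μ‖ₑ ^ 2 ∂μ
      ≤ ∫⁻ p, ‖f p.1 - f p.2‖ₑ ^ 2 ∂μ.prod μ := by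
  rw [lintegral_prod_symm' _ (by fun_prop), mul_comm, ← lintegral_const]
  exact lintegral_mono fun z =>
    lintegral_enorm_sub_average_sq_le hf.aestronglyMeasurable (f z)

lemma lintegral_prod_enorm_sub_sq_le {g : α → ℝ} (hg : Measurable g) :
    ∫⁻ p, ‖g p.1 - g p.2‖ₑ ^ 2 ∂μ.prod μ ≤ μ univ * (4 * ∫⁻ x, ‖g x‖ₑ ^ 2 ∂μ) := by
  calc ∫⁻ p, ‖g p.1 - g p.2‖ₑ ^ 2 ∂μ.prod μ
      ≤ ∫⁻ p, (2 * ‖g p.1‖ₑ ^ 2 + 2 * ‖g p.2‖ₑ ^ 2) ∂μ.prod μ :=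
        lintegral_mono fun p => enorm_sub_sq_le _ _
    _ = μ univ * (4 * ∫⁻ x, ‖g x‖ₑ ^ 2 ∂μ) := by
        rw [lintegral_prod _ (by fun_prop)]
        simp only [lintegral_add_left measurable_const, lintegral_const]
        rw [lintegral_add_right _ measurable_const, lintegral_mul_const _ (by fun_prop),
          lintegral_const_mul _ (by fun_prop), lintegral_const_mul _ (by fun_prop),
          lintegral_const]
        ring

lemma lintegral_enorm_sub_average_sq_le_liminf {ι : Type*} {l : Filter ι} [l.NeBot]
    [l.IsCountablyGenerated] {f : α → ℝ} {g : ι → α → ℝ} (hf : Measurable f)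
    (hg : ∀ i, Measurable (g i))
    (hfg : ∀ᵐ p ∂μ.prod μ,
      ‖f p.1 - f p.2‖ₑ ^ 2 ≤ liminf (fun i => ‖g i p.1 - g i p.2‖ₑ ^ 2) l) :
    ∫⁻ x, ‖f x - ⨍ z, f z ∂μ‖ₑ ^ 2 ∂μ ≤ 4 * liminf (fun i => ∫⁻ x, ‖g i x‖ₑ ^ 2 ∂μ) l := by
  rcases eq_zero_or_neZero μ with rfl | _
  · simp
  refine (ENNReal.mul_le_mul_iff_right (NeZero.ne (μ univ))
    (measure_ne_top μ univ)).1 ?_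
  calc μ univ * ∫⁻ x, ‖f x - ⨍ z, f z ∂μ‖ₑ ^ 2 ∂μ
      ≤ ∫⁻ p, ‖f p.1 - f p.2‖ₑ ^ 2 ∂μ.prod μ :=
        measure_univ_mul_lintegral_enorm_sub_average_sq_le hf
    _ ≤ ∫⁻ p, liminf (fun i => ‖g i p.1 - g i p.2‖ₑ ^ 2) l ∂μ.prod μ := lintegral_mono_ae hfg
    _ ≤ liminf (fun i => ∫⁻ p, ‖g i p.1 - g i p.2‖ₑ ^ 2 ∂μ.prod μ) l :=
        lintegral_liminf_le fun i => by have := hg i; fun_prop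
    _ ≤ liminf (fun i => μ univ * (4 * ∫⁻ x, ‖g i x‖ₑ ^ 2 ∂μ)) l :=
        liminf_le_liminf (.of_forall fun i => lintegral_prod_enorm_sub_sq_le (hg i))
    _ = μ univ * (4 * liminf (fun i => ∫⁻ x, ‖g i x‖ₑ ^ 2 ∂μ) l) := by
        rw [ENNReal.liminf_const_mul_of_ne_top (measure_ne_top μ univ),
          ENNReal.liminf_const_mul_of_ne_top (by norm_num)]

-- A one-sided Fatou lemma: replacing `F i` by `min (F i) K` turns it into dominated convergence.
lemma enorm_integral_sq_le_liminf {ι : Type*} {l : Filter ι} [l.NeBot] [l.IsCountablyGenerated]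
    {F : ι → α → ℝ} {K : α → ℝ} {M : ℝ} (hF : ∀ᶠ i in l, Integrable (F i) μ)
    (hK : Integrable K μ) (hK0 : 0 ≤ K) (hM : ∀ᶠ i in l, ∀ᵐ y ∂μ, -M ≤ F i y)
    (hFK : ∀ᵐ y ∂μ, ∀ᶠ i in l, K y ≤ F i y) :
    ‖∫ y, K y ∂μ‖ₑ ^ 2 ≤ liminf (fun i => ‖∫ y, F i y ∂μ‖ₑ ^ 2) l := by
  have hlim : Tendsto (fun i => ∫ y, min (F i y) (K y) ∂μ) l (𝓝 (∫ y, K y ∂μ)) := by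
    refine tendsto_integral_filter_of_dominated_convergence (fun y => |M| + K y)
      (hF.mono fun i hi => (hi.inf hK).aestronglyMeasurable) ?_
      ((integrable_const _).add hK) ?_
    · filter_upwards [hM] with i hi
      filter_upwards [hi] with y hy
      have hKy : 0 ≤ K y := hK0 y
      refine abs_le.2 ⟨le_min ?_ ?_, (min_le_right _ _).trans ?_⟩ <;>
        linarith [le_abs_self M, abs_nonneg M]
    · filter_upwards [hFK] with y hy
      exact tendsto_const_nhds.congr' (hy.mono fun i hi => (min_eq_right hi).symm)
  have hlimSq := (ENNReal.continuous_pow 2).continuousAt.tendsto.comp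
    (ENNReal.tendsto_ofReal hlim)
  rw [Real.enorm_of_nonneg (integral_nonneg hK0), ← hlimSq.liminf_eq]
  refine liminf_le_liminf (hF.mono fun i hi => pow_le_pow_left' ?_ 2)
  calc ENNReal.ofReal (∫ y, min (F i y) (K y) ∂μ)
      ≤ ENNReal.ofReal (∫ y, F i y ∂μ) :=
        ENNReal.ofReal_le_ofReal (integral_mono (hi.inf hK) hi fun y => min_le_left _ _)
    _ ≤ ‖∫ y, F i y ∂μ‖ₑ := Real.ofReal_le_enorm _

end SquareIntegrals

section TruncatedHilbert

open Filter Topology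

/-- The kernel `(y - x)⁻¹` of the Hilbert transform, cut off to `0` where `|y - x| ≤ t`. -/
def truncKernel (t x y : ℝ) : ℝ := if t < |y - x| then (y - x)⁻¹ else 0

/-- The truncated Hilbert transform `H_t ν` of a measure. It agrees with `Htr σ 1_S t` for
`ν = 1_S σ`, see `Htr_indicator_one`; carrying the set in the measure makes it additive in `ν`. -/
def truncHilbert (ν : Measure ℝ) (t x : ℝ) : ℝ := ∫ y, truncKernel t x y ∂ν

lemma measurable_truncKernel_prod (t : ℝ) :
    Measurable fun p : ℝ × ℝ => truncKernel t p.1 p.2 :=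
  Measurable.ite (measurableSet_lt measurable_const (by fun_prop)) (by fun_prop) measurable_const

lemma abs_truncKernel_le {t : ℝ} (ht : 0 < t) (x y : ℝ) : |truncKernel t x y| ≤ t⁻¹ := by
  unfold truncKernel
  split_ifs with h
  · rw [abs_inv]
    gcongr
  · simpa using ht.le

lemma integrable_truncKernel (ν : Measure ℝ) [IsFiniteMeasure ν] {t : ℝ} (ht : 0 < t) (x : ℝ) :
    Integrable (truncKernel t x) ν :=
  .of_bound ((measurable_truncKernel_prod t).comp measurable_prodMk_left).aestronglyMeasurable t⁻¹
    (ae_of_all _ (abs_truncKernel_le ht x))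

lemma measurable_truncHilbert (ν : Measure ℝ) [SFinite ν] (t : ℝ) :
    Measurable (truncHilbert ν t) :=
  ((measurable_truncKernel_prod t).stronglyMeasurable.integral_prod_right (ν := ν)).measurable

lemma Htr_indicator_one (σ : Measure ℝ) {S : Set ℝ} (hS : MeasurableSet S) (t : ℝ) :
    Htr σ (S.indicator 1) t = truncHilbert (σ.restrict S) t := by
  funext x
  have hfar : MeasurableSet {y : ℝ | t < |y - x|} :=
    measurableSet_lt measurable_const (by fun_prop)
  unfold Htr truncHilbert
  rw [← integral_indicator hfar, ← integral_indicator hS]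
  congr 1 with y
  by_cases hty : t < |y - x| <;> by_cases hyS : y ∈ S <;> simp [indicator, truncKernel, hty, hyS]

lemma truncHilbert_restrict_diff (σ : Measure ℝ) {S T : Set ℝ} (hT : MeasurableSet T)
    (hTS : T ⊆ S) (hS : σ S ≠ ⊤) {t : ℝ} (ht : 0 < t) (x : ℝ) :
    truncHilbert (σ.restrict (S \ T)) t x
      = truncHilbert (σ.restrict S) t x - truncHilbert (σ.restrict T) t x := by
  have : IsFiniteMeasure (σ.restrict S) := isFiniteMeasure_restrict.2 hS
  exact setIntegral_sdiff hT (integrable_truncKernel _ ht x) hTS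

lemma eventually_truncKernel_eq (x y : ℝ) :
    ∀ᶠ t in 𝓝[>] 0, truncKernel t x y = (y - x)⁻¹ := by
  rcases eq_or_ne y x with rfl | hyx
  · simp [truncKernel]
  have hnear : ∀ᶠ t : ℝ in 𝓝[>] 0, t < |y - x| :=
    nhdsWithin_le_nhds (gt_mem_nhds (abs_pos.2 (sub_ne_zero.2 hyx)))
  exact hnear.mono fun t ht => if_pos ht

lemma neg_inv_sub_le_truncKernel_sub {x x' y : ℝ} (hxx' : x < x') (hy : y ∉ Icc x x') (t : ℝ) :
    -(x' - x)⁻¹ ≤ truncKernel t x' y - truncKernel t x y := by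
  have hgap : 0 < (x' - x)⁻¹ := inv_pos.2 (sub_pos.2 hxx')
  rcases lt_or_ge y x with hyx | hxy
  · have hle : (x' - y)⁻¹ ≤ (x' - x)⁻¹ := by gcongr
    have hneg : (y - x')⁻¹ = -(x' - y)⁻¹ := by rw [← inv_neg, neg_sub]
    have hx : (y - x)⁻¹ ≤ 0 := inv_nonpos.2 (sub_nonpos.2 hyx.le)
    unfold truncKernel
    split_ifs <;> linarith
  · have hx'y : x' < y := not_le.1 fun h => hy ⟨hxy, h⟩
    have hle : (y - x)⁻¹ ≤ (x' - x)⁻¹ := by gcongr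
    have hx' : 0 ≤ (y - x')⁻¹ := inv_nonneg.2 (sub_nonneg.2 hx'y.le)
    unfold truncKernel
    split_ifs <;> linarith

end TruncatedHilbert

section PoissonMonotonicity

open Filter Topology

variable {c ℓ : ℝ}

lemma poissonKernel_le_inv_sub_inv (hℓ : 0 < ℓ) {x x' y : ℝ} (hx : |x - c| ≤ ℓ)
    (hx' : |x' - c| ≤ ℓ) (hxx' : x ≤ x') (hy : y ∉ Icc x x') :
    (x' - x) / ℓ * (ℓ / (ℓ + |y - c|) ^ 2) ≤ (y - x')⁻¹ - (y - x)⁻¹ := by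
  have hprod : 0 < (y - x') * (y - x) := by
    rcases lt_or_ge y x with hyx | hxy
    · exact mul_pos_of_neg_of_neg (by linarith) (by linarith)
    · have hx'y : x' < y := not_le.1 fun h => hy ⟨hxy, h⟩
      exact mul_pos (by linarith) (by linarith)
  have hdist {z : ℝ} (hz : |z - c| ≤ ℓ) : |y - z| ≤ ℓ + |y - c| := by
    have := abs_sub_le y c z
    rw [abs_sub_comm c z] at this
    linarith
  calc (x' - x) / ℓ * (ℓ / (ℓ + |y - c|) ^ 2)
      = (x' - x) / (ℓ + |y - c|) ^ 2 := div_mul_div_cancel₀ hℓ.ne'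
    _ ≤ (x' - x) / ((y - x') * (y - x)) := by
        have hle : (y - x') * (y - x) ≤ (ℓ + |y - c|) ^ 2 := by
          rw [← abs_of_pos hprod, abs_mul, sq]
          exact mul_le_mul (hdist hx') (hdist hx) (abs_nonneg _) (by positivity)
        have := sub_nonneg.2 hxx'
        gcongr
    _ = (y - x')⁻¹ - (y - x)⁻¹ := by
        rw [inv_sub_inv (left_ne_zero_of_mul hprod.ne') (right_ne_zero_of_mul hprod.ne')]
        ring

variable {ν : Measure ℝ} [IsFiniteMeasure ν]

lemma integrable_poissonKernel (hℓ : 0 < ℓ) :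
    Integrable (fun y => ℓ / (ℓ + |y - c|) ^ 2) ν := by
  refine .of_bound (Measurable.aestronglyMeasurable (by fun_prop)) (ℓ / ℓ ^ 2)
    (ae_of_all _ fun y => ?_)
  rw [Real.norm_of_nonneg (by positivity)]
  gcongr
  exact le_add_of_nonneg_right (abs_nonneg _)

lemma poissonI_eq_ofReal_integral (hℓ : 0 < ℓ) :
    poissonI c ℓ ν = ENNReal.ofReal (∫ y, ℓ / (ℓ + |y - c|) ^ 2 ∂ν) :=
  (ofReal_integral_eq_lintegral_ofReal (integrable_poissonKernel hℓ)
    (ae_of_all _ fun y => by positivity)).symm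

variable {J : Set ℝ}

lemma enorm_poisson_increment_sq_le_liminf_of_lt (hℓ : 0 < ℓ) (hJ : J.OrdConnected)
    (hJc : ∀ x ∈ J, |x - c| ≤ ℓ) (hν : ∀ᵐ y ∂ν, y ∉ J) {x x' : ℝ} (hx : x ∈ J) (hx' : x' ∈ J)
    (hxx' : x < x') :
    ‖(x' - x) / ℓ * ∫ y, ℓ / (ℓ + |y - c|) ^ 2 ∂ν‖ₑ ^ 2
      ≤ liminf (fun t => ‖truncHilbert ν t x' - truncHilbert ν t x‖ₑ ^ 2) (𝓝[>] 0) := by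
  have hpos : ∀ᶠ t : ℝ in 𝓝[>] 0, 0 < t := self_mem_nhdsWithin
  have hoff : ∀ᵐ y ∂ν, y ∉ Icc x x' := hν.mono fun y hy hmem => hy (hJ.out hx hx' hmem)
  have hint : ∀ᶠ t in 𝓝[>] 0,
      Integrable (fun y => truncKernel t x' y - truncKernel t x y) ν :=
    hpos.mono fun t ht => (integrable_truncKernel ν ht x').sub (integrable_truncKernel ν ht x)
  have hincr : (fun t => ‖truncHilbert ν t x' - truncHilbert ν t x‖ₑ ^ 2)
      =ᶠ[𝓝[>] 0] fun t => ‖∫ y, (truncKernel t x' y - truncKernel t x y) ∂ν‖ₑ ^ 2 :=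
    hpos.mono fun t ht => by
      simp only [truncHilbert,
        integral_sub (integrable_truncKernel ν ht x') (integrable_truncKernel ν ht x)]
  rw [← integral_const_mul, liminf_congr hincr]
  refine enorm_integral_sq_le_liminf (M := (x' - x)⁻¹) hint
    ((integrable_poissonKernel hℓ).const_mul _) (fun y => ?_)
    (.of_forall fun t => hoff.mono fun y hy => neg_inv_sub_le_truncKernel_sub hxx' hy t)
    (hoff.mono fun y hy => ?_)
  · have := sub_nonneg.2 hxx'.le
    exact mul_nonneg (by positivity) (by positivity)
  · filter_upwards [eventually_truncKernel_eq x y, eventually_truncKernel_eq x' y] with t ht ht'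
    rw [ht, ht']
    exact poissonKernel_le_inv_sub_inv hℓ (hJc x hx) (hJc x' hx') hxx'.le hy

lemma enorm_poisson_increment_sq_le_liminf (hℓ : 0 < ℓ) (hJ : J.OrdConnected)
    (hJc : ∀ x ∈ J, |x - c| ≤ ℓ) (hν : ∀ᵐ y ∂ν, y ∉ J) {x x' : ℝ} (hx : x ∈ J) (hx' : x' ∈ J) :
    ‖(x' - x) / ℓ * ∫ y, ℓ / (ℓ + |y - c|) ^ 2 ∂ν‖ₑ ^ 2
      ≤ liminf (fun t => ‖truncHilbert ν t x' - truncHilbert ν t x‖ₑ ^ 2) (𝓝[>] 0) := by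
  rcases lt_trichotomy x x' with hlt | rfl | hgt
  · exact enorm_poisson_increment_sq_le_liminf_of_lt hℓ hJ hJc hν hx hx' hlt
  · simp
  · have h := enorm_poisson_increment_sq_le_liminf_of_lt hℓ hJ hJc hν hx' hx hgt
    rw [← neg_sub x' x, neg_div, neg_mul, enorm_neg] at h
    simpa only [enorm_sub_rev] using h

lemma poissonI_sq_mul_lintegral_le_liminf (hℓ : 0 < ℓ) (hJ : J.OrdConnected)
    (hJc : ∀ x ∈ J, |x - c| ≤ ℓ) (hν : ∀ᵐ y ∂ν, y ∉ J) {μ : Measure ℝ} [IsFiniteMeasure μ]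
    (hμ : ∀ᵐ x ∂μ, x ∈ J) :
    poissonI c ℓ ν ^ 2 * ∫⁻ x, ‖(x - ⨍ z, z ∂μ) / ℓ‖ₑ ^ 2 ∂μ
      ≤ 4 * liminf (fun t => ∫⁻ x, ‖truncHilbert ν t x‖ₑ ^ 2 ∂μ) (𝓝[>] 0) := by
  set P := ∫ y, ℓ / (ℓ + |y - c|) ^ 2 ∂ν
  have hP0 : 0 ≤ P := integral_nonneg fun y => by positivity
  have hpairs : ∀ᵐ p ∂μ.prod μ, p.1 ∈ J ∧ p.2 ∈ J :=
    (Measure.quasiMeasurePreserving_fst.ae hμ).and (Measure.quasiMeasurePreserving_snd.ae hμ)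
  have hmean : ⨍ z, P / ℓ * z ∂μ = P / ℓ * ⨍ z, z ∂μ := integral_const_mul _ _
  calc poissonI c ℓ ν ^ 2 * ∫⁻ x, ‖(x - ⨍ z, z ∂μ) / ℓ‖ₑ ^ 2 ∂μ
      = ∫⁻ x, ‖P / ℓ * x - ⨍ z, P / ℓ * z ∂μ‖ₑ ^ 2 ∂μ := by
        rw [hmean, poissonI_eq_ofReal_integral hℓ, ← Real.enorm_of_nonneg hP0,
          ← lintegral_const_mul _ (by fun_prop)]
        congr 1 with x
        rw [← mul_pow, ← enorm_mul]
        congr 2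
        ring
    _ ≤ _ := by
        refine lintegral_enorm_sub_average_sq_le_liminf (by fun_prop)
          (measurable_truncHilbert ν) (hpairs.mono fun p hp => ?_)
        convert enorm_poisson_increment_sq_le_liminf hℓ hJ hJc hν hp.2 hp.1 using 3
        ring

end PoissonMonotonicity

namespace DI

lemma len_pos_s17 (J : DI) : 0 < J.len := zpow_pos two_pos _

lemma measurableSet_set_s17 (J : DI) : MeasurableSet J.set := measurableSet_Ico

lemma ordConnected_set (J : DI) : J.set.OrdConnected := ordConnected_Ico

lemma abs_sub_center_le (J : DI) {x : ℝ} (hx : x ∈ J.set) : |x - J.center| ≤ J.len := by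
  have hpos := J.len_pos_s17
  obtain ⟨hlo, hhi⟩ := hx
  simp only [center, len] at *
  exact abs_le.2 ⟨by linarith, by linarith⟩

instance inst_s17 : Countable DI :=
  Function.Injective.countable (f := fun I : DI => (I.k, I.n)) fun ⟨_, _⟩ ⟨_, _⟩ h => by
    simpa using h

end DI

lemma energySq_mul_measure (ω : Measure ℝ) [IsLocallyFiniteMeasure ω] (J : DI) :
    energySq ω J * ω J.set
      = ∫⁻ x in J.set, ‖(x - ⨍ z in J.set, z ∂ω) / J.len‖ₑ ^ 2 ∂ω := by
  have hmean : avg ω J.set (fun z => z) = ⨍ z in J.set, z ∂ω := by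
    rw [setAverage_eq, smul_eq_mul, avg, Measure.real, div_eq_inv_mul]
  have hscale (x m : ℝ) : ‖(x - m) / J.len‖ₑ ^ 2
      = ENNReal.ofReal ((x - m) ^ 2) * (ENNReal.ofReal (J.len ^ 2))⁻¹ := by
    rw [enorm_sq_eq_ofReal_sq, div_pow, ENNReal.ofReal_div_of_pos (pow_pos J.len_pos_s17 2),
      div_eq_mul_inv]
  simp only [hscale]
  rw [lintegral_mul_const _ (by fun_prop), energySq, hmean]
  rcases eq_or_ne (ω J.set) 0 with h0 | h0
  · simp [Measure.restrict_eq_zero.2 h0]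
  have htop : ω J.set ≠ ⊤ := measure_Ico_lt_top.ne
  rw [div_eq_mul_inv, ENNReal.mul_inv (.inl h0) (.inl htop), mul_assoc, mul_right_comm,
    ENNReal.inv_mul_cancel h0 htop, one_mul]

section Testing

open Filter Topology

variable (σ ω : Measure ℝ)

lemma lintegral_truncHilbert_sq_le_testH {a b t : ℝ} (hfin : σ (Ico a b) ≠ ⊤) (ht : 0 < t) :
    ∫⁻ x, ‖truncHilbert (σ.restrict (Ico a b)) t x‖ₑ ^ 2 ∂ω ≤ testH σ ω ^ 2 * σ (Ico a b) := by
  rcases eq_or_ne (σ (Ico a b)) 0 with h0 | h0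
  · simp [truncHilbert, Measure.restrict_eq_zero.2 h0]
  have hab : a < b := nonempty_Ico.1 (nonempty_of_measure_ne_zero h0)
  have hquot : eLpNorm (truncHilbert (σ.restrict (Ico a b)) t) 2 ω / σ (Ico a b) ^ (1 / 2 : ℝ)
      ≤ testH σ ω := by
    rw [← Htr_indicator_one σ measurableSet_Ico t]
    exact le_iSup_of_le a <| le_iSup_of_le b <| le_iSup_of_le hab <| le_iSup_of_le t <|
      le_iSup_of_le ht le_rfl
  rw [ENNReal.div_le_iff (by simp [ENNReal.rpow_eq_zero_iff, h0])
    (ENNReal.rpow_ne_top_of_nonneg (by norm_num) hfin)] at hquot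
  calc ∫⁻ x, ‖truncHilbert (σ.restrict (Ico a b)) t x‖ₑ ^ 2 ∂ω
      = eLpNorm (truncHilbert (σ.restrict (Ico a b)) t) 2 ω ^ 2 :=
        lintegral_enorm_sq_eq_eLpNorm_sq _
    _ ≤ (testH σ ω * σ (Ico a b) ^ (1 / 2 : ℝ)) ^ 2 := by gcongr
    _ = testH σ ω ^ 2 * σ (Ico a b) := by
        rw [mul_pow, ← ENNReal.rpow_mul_natCast]
        norm_num

lemma setLIntegral_truncHilbert_diff_sq_le {S : Set ℝ} (hS : σ S ≠ ⊤) {J : DI}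
    (hJS : J.set ⊆ S) {t : ℝ} (ht : 0 < t) :
    ∫⁻ x in J.set, ‖truncHilbert (σ.restrict (S \ J.set)) t x‖ₑ ^ 2 ∂ω
      ≤ 2 * ∫⁻ x in J.set, ‖truncHilbert (σ.restrict S) t x‖ₑ ^ 2 ∂ω
        + 2 * (testH σ ω ^ 2 * σ J.set) := by
  have hJ : σ J.set ≠ ⊤ := ne_top_of_le_ne_top hS (measure_mono hJS)
  have : IsFiniteMeasure (σ.restrict S) := isFiniteMeasure_restrict.2 hS
  have : IsFiniteMeasure (σ.restrict J.set) := isFiniteMeasure_restrict.2 hJ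
  have hmS := measurable_truncHilbert (σ.restrict S) t
  have hmJ := measurable_truncHilbert (σ.restrict J.set) t
  calc ∫⁻ x in J.set, ‖truncHilbert (σ.restrict (S \ J.set)) t x‖ₑ ^ 2 ∂ω
      ≤ ∫⁻ x in J.set, (2 * ‖truncHilbert (σ.restrict S) t x‖ₑ ^ 2
          + 2 * ‖truncHilbert (σ.restrict J.set) t x‖ₑ ^ 2) ∂ω :=
        lintegral_mono fun x => by
          rw [truncHilbert_restrict_diff σ J.measurableSet_set_s17 hJS hS ht]
          exact enorm_sub_sq_le _ _
    _ = 2 * ∫⁻ x in J.set, ‖truncHilbert (σ.restrict S) t x‖ₑ ^ 2 ∂ω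
          + 2 * ∫⁻ x in J.set, ‖truncHilbert (σ.restrict J.set) t x‖ₑ ^ 2 ∂ω := by
        rw [lintegral_add_left (by fun_prop), lintegral_const_mul _ (by fun_prop),
          lintegral_const_mul _ (by fun_prop)]
    _ ≤ _ := by
        gcongr
        exact (setLIntegral_le_lintegral _ _).trans (lintegral_truncHilbert_sq_le_testH σ ω hJ ht)

lemma tsum_setLIntegral_truncHilbert_diff_sq_le {a b t : ℝ} (hfin : σ (Ico a b) ≠ ⊤)
    (ht : 0 < t) {𝒮 : Set DI} (hsub : ∀ J ∈ 𝒮, J.set ⊆ Ico a b)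
    (hdisj : 𝒮.Pairwise fun J J' => Disjoint J.set J'.set) :
    ∑' J : 𝒮, ∫⁻ x in (J : DI).set,
        ‖truncHilbert (σ.restrict (Ico a b \ (J : DI).set)) t x‖ₑ ^ 2 ∂ω
      ≤ 4 * (testH σ ω ^ 2 * σ (Ico a b)) := by
  have hdisj' : Pairwise (Function.onFun Disjoint fun J : 𝒮 => (J : DI).set) :=
    fun J J' hne => hdisj J.2 J'.2 (Subtype.coe_ne_coe.2 hne)
  have hmeas (J : 𝒮) : MeasurableSet (J : DI).set := (J : DI).measurableSet_set_s17
  calc _ ≤ ∑' J : 𝒮, (2 * ∫⁻ x in (J : DI).set, ‖truncHilbert (σ.restrict (Ico a b)) t x‖ₑ ^ 2 ∂ω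
          + 2 * (testH σ ω ^ 2 * σ (J : DI).set)) :=
        ENNReal.tsum_le_tsum fun J =>
          setLIntegral_truncHilbert_diff_sq_le σ ω hfin (hsub J J.2) ht
    _ = 2 * ∫⁻ x in ⋃ J : 𝒮, (J : DI).set, ‖truncHilbert (σ.restrict (Ico a b)) t x‖ₑ ^ 2 ∂ω
          + 2 * (testH σ ω ^ 2 * σ (⋃ J : 𝒮, (J : DI).set)) := by
        rw [ENNReal.tsum_add, ENNReal.tsum_mul_left, ENNReal.tsum_mul_left, ENNReal.tsum_mul_left,
          lintegral_iUnion hmeas hdisj', measure_iUnion hdisj' hmeas]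
    _ ≤ 2 * (testH σ ω ^ 2 * σ (Ico a b)) + 2 * (testH σ ω ^ 2 * σ (Ico a b)) := by
        gcongr
        · exact (setLIntegral_le_lintegral _ _).trans
            (lintegral_truncHilbert_sq_le_testH σ ω hfin ht)
        · exact iUnion_subset fun J => hsub J J.2
    _ = 4 * (testH σ ω ^ 2 * σ (Ico a b)) := by ring

lemma poisson_sq_mul_energySq_le_liminf [IsLocallyFiniteMeasure ω] {S : Set ℝ}
    (hSm : MeasurableSet S) (hS : σ S ≠ ⊤) (J : DI) :
    J.poisson (σ.restrict (S \ J.set)) ^ 2 * energySq ω J * ω J.set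
      ≤ 4 * liminf (fun t => ∫⁻ x in J.set,
          ‖truncHilbert (σ.restrict (S \ J.set)) t x‖ₑ ^ 2 ∂ω) (𝓝[>] 0) := by
  have : IsFiniteMeasure (σ.restrict (S \ J.set)) :=
    isFiniteMeasure_restrict.2 (ne_top_of_le_ne_top hS (measure_mono sdiff_subset))
  have : IsFiniteMeasure (ω.restrict J.set) :=
    isFiniteMeasure_restrict.2 measure_Ico_lt_top.ne
  rw [mul_assoc, energySq_mul_measure]
  exact poissonI_sq_mul_lintegral_le_liminf J.len_pos_s17 J.ordConnected_set
    (fun x hx => J.abs_sub_center_le hx)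
    ((ae_restrict_mem (hSm.diff J.measurableSet_set_s17)).mono fun y hy => hy.2)
    (ae_restrict_mem J.measurableSet_set_s17)

theorem statement17_general [IsLocallyFiniteMeasure σ] [IsLocallyFiniteMeasure ω] :
    energyCharSq σ ω ≤ 16 * testH σ ω ^ 2 := by
  refine iSup_le fun a => iSup_le fun b => iSup_le fun _ => iSup_le fun 𝒮 => iSup_le fun hsub =>
    iSup_le fun hdisj => ENNReal.div_le_of_le_mul ?_
  have hfin : σ (Ico a b) ≠ ⊤ := measure_Ico_lt_top.ne
  set A : ℝ → 𝒮 → ℝ≥0∞ := fun t J => ∫⁻ x in (J : DI).set,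
    ‖truncHilbert (σ.restrict (Ico a b \ (J : DI).set)) t x‖ₑ ^ 2 ∂ω
  have hA : ∀ᶠ t in 𝓝[>] 0, ∑' J, A t J ≤ 4 * (testH σ ω ^ 2 * σ (Ico a b)) := by
    filter_upwards [self_mem_nhdsWithin] with t ht
    exact tsum_setLIntegral_truncHilbert_diff_sq_le σ ω hfin ht hsub hdisj
  calc _ ≤ ∑' J : 𝒮, 4 * liminf (A · J) (𝓝[>] 0) :=
        ENNReal.tsum_le_tsum fun J =>
          poisson_sq_mul_energySq_le_liminf σ ω measurableSet_Ico hfin J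
    _ = 4 * ∑' J : 𝒮, liminf (A · J) (𝓝[>] 0) := ENNReal.tsum_mul_left
    _ ≤ 4 * liminf (fun t => ∑' J, A t J) (𝓝[>] 0) := by
        gcongr
        exact tsum_liminf_le_liminf_tsum A
    _ ≤ 4 * (4 * (testH σ ω ^ 2 * σ (Ico a b))) := by
        gcongr
        exact liminf_le_of_le (by isBoundedDefault) fun c hc => by
          obtain ⟨t, hct, htA⟩ := (hc.and hA).exists
          exact hct.trans htA
    _ = 16 * testH σ ω ^ 2 * σ (Ico a b) := by ring

end Testing

/-- Control of the energy characteristic by testing and offset A₂. -/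
theorem statement17 :
    ∃ C : ℝ, 0 < C ∧
      ∀ (r : ℕ) (σ ω : Measure ℝ), IsLocallyFiniteMeasure σ → IsLocallyFiniteMeasure ω →
        energyCharSq σ ω ≤ ENNReal.ofReal C * (testH σ ω ^ 2 + A2offset r σ ω) := by
  refine ⟨16, by norm_num, fun r σ ω _ _ => (statement17_general σ ω).trans ?_⟩
  simpa using mul_le_mul_right le_self_add 16

end
end
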